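/- For any indices 0 ≤ i < j, and for any a, b in the support of the function f⁽ʲ⁾ − f⁽ⁱ⁾, we have |a − b| ≤ j − i. In particular, max supp(f⁽ʲ⁾ − f⁽ⁱ⁾) − min supp(f⁽ʲ⁾ − f⁽ⁱ⁾) ≤ j − i whenever the support is nonempty. -/

import Mathlib

/-!
An update changes `f` only at the current pointer, and the pointer moves by at most one per
operation. Hence during the `n` operations after time `i` all pointer positions lie in an integer
interval of length at most `n`, and this interval contains every point where `f` has changed
(`DCRun_window`, by induction on `n`). Two points of the support thus differ by at most `n`.
-/

/-- An operation of the "dynamic convolution with local updates and queries"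
data structure. -/
inductive DCOp where
  | update (x : ℝ)
  | incP
  | decP
  | rotateLeft
  | rotateRight
  | query

/-- The state of the data structure: the function `f : ℤ → ℝ`, the update
pointer `p` and the rotation counter `c`. -/
structure DCState where
  f : ℤ → ℝ
  p : ℤ
  c : ℤ

/-- The effect of a single operation on the state. -/
def DCStep (s : DCState) : DCOp → DCState
  | .update x => { s with f := Function.update s.f s.p (s.f s.p + x) }
  | .incP => { s with p := s.p + 1 }
  | .decP => { s with p := s.p - 1 }
  | .rotateLeft => { s with c := s.c + 1 }
  | .rotateRight => { s with c := s.c - 1 }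
  | .query => s

/-- `DCRun ops k` is the state after performing the first `k` operations
`ops 1, ops 2, …, ops k`, starting from `f ≡ 0`, `p = 0`, `c = 0`. -/
def DCRun (ops : ℕ → DCOp) : ℕ → DCState
  | 0 => ⟨0, 0, 0⟩
  | k + 1 => DCStep (DCRun ops k) (ops (k + 1))

/-- After `n` further operations there is a window `[lo, hi]` of length at most `n` that contains
the pointer and every point where `f` has changed. Keeping the pointer inside the window is what
makes the induction work: a pointer move enlarges the window by at most one, and an update changes
`f` only inside it. -/
lemma DCRun_window (ops : ℕ → DCOp) (i n : ℕ) :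
    ∃ lo hi : ℤ, hi - lo ≤ n ∧ lo ≤ (DCRun ops (i + n)).p ∧ (DCRun ops (i + n)).p ≤ hi ∧
      ∀ x, (DCRun ops (i + n)).f x ≠ (DCRun ops i).f x → lo ≤ x ∧ x ≤ hi := by
  induction n with
  | zero => exact ⟨(DCRun ops i).p, (DCRun ops i).p, by simp, le_rfl, le_rfl, by simp⟩
  | succ n ih =>
    obtain ⟨lo, hi, hlen, hlo, hhi, h⟩ := ih
    have e : DCRun ops (i + (n + 1)) = DCStep (DCRun ops (i + n)) (ops (i + n + 1)) := rfl
    rw [e]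
    generalize DCRun ops (i + n) = s at *
    push_cast
    cases ops (i + n + 1) with
    | update x =>
      refine ⟨lo, hi, by omega, hlo, hhi, fun y hy => ?_⟩
      by_cases hyp : y = s.p
      · subst hyp
        exact ⟨hlo, hhi⟩
      · exact h y (by simpa [DCStep, Function.update_of_ne hyp] using hy)
    | incP =>
      refine ⟨lo, hi + 1, by omega, by simp only [DCStep]; omega, by simp only [DCStep]; omega,
        fun y hy => ?_⟩
      have := h y hy
      omega
    | decP =>
      refine ⟨lo - 1, hi, by omega, by simp only [DCStep]; omega, by simp only [DCStep]; omega,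
        fun y hy => ?_⟩
      have := h y hy
      omega
    | rotateLeft => exact ⟨lo, hi, by omega, hlo, hhi, h⟩
    | rotateRight => exact ⟨lo, hi, by omega, hlo, hhi, h⟩
    | query => exact ⟨lo, hi, by omega, hlo, hhi, h⟩

/-- **Lemma 4 (compact support of differences).**
For any `0 ≤ i < j`, any two points `a, b` in the support of `f⁽ʲ⁾ − f⁽ⁱ⁾`
satisfy `|a − b| ≤ j − i`; in particular
`max supp(f⁽ʲ⁾ − f⁽ⁱ⁾) − min supp(f⁽ʲ⁾ − f⁽ⁱ⁾) ≤ j − i`. -/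
theorem DC_compact_support (ops : ℕ → DCOp) (i j : ℕ) (hij : i < j)
    (a b : ℤ)
    (ha : a ∈ Function.support ((DCRun ops j).f - (DCRun ops i).f))
    (hb : b ∈ Function.support ((DCRun ops j).f - (DCRun ops i).f)) :
    |a - b| ≤ (j : ℤ) - (i : ℤ) := by
  obtain ⟨n, rfl⟩ := Nat.exists_eq_add_of_le hij.le
  obtain ⟨lo, hi, hlen, -, -, h⟩ := DCRun_window ops i n
  have key : ∀ x ∈ Function.support ((DCRun ops (i + n)).f - (DCRun ops i).f),
      lo ≤ x ∧ x ≤ hi :=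
    fun x hx => h x (fun e => hx (by simp [e]))
  have h1 := key a ha
  have h2 := key b hb
  rw [abs_le]
  push_cast
  omega
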